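/- arXiv:2412.06813 — 2 statements merged into one kernel-verified Lean document; each statement's English description precedes it below -/
import Mathlib

section
/- Every solution (U,B,T) ∈ V×W×Z of the reduced HDG system satisfies the a priori bounds ‖U‖_V + ‖B‖_W ≤ 2ζ²(‖f₁‖ + ‖f₂‖ + ‖f₃‖) and ‖T‖_Z ≤ Pr·Re·‖f₃‖. (Abstract version of the stability bounds (4.7)–(4.8) of Lemma 4.3.) -/
/-!
Testing each equation with the solution itself removes `c₁` and `c₃`, and the two `c₂` terms cancel
each other, so only the coercive forms and the data remain. The temperature is therefore bounded by
`f₃` alone, which turns the buoyancy term `G` into data for the velocity. In the rescaled unknowns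
`x = ‖U‖ / Ha` and `y = ‖B‖ / Rm` the remaining energy inequality is `x² + y² ≤ p x + q y`, and
`(x + y)² ≤ 2 (x² + y²)` makes it linear in `x + y`.
-/

theorem le_of_sq_le_mul {R : Type*} [Semiring R] [LinearOrder R] [IsStrictOrderedRing R] {x r : R}
    (hr : 0 ≤ r) (h : x ^ 2 ≤ r * x) : x ≤ r := by
  rcases le_or_gt x 0 with hx | hx
  · exact hx.trans hr
  · exact le_of_mul_le_mul_right (sq x ▸ h) hx

theorem norm_le_mul_opNorm_of_norm_sq_le_mul_norm_apply {𝕜 E F : Type*}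
    [NontriviallyNormedField 𝕜] [SeminormedAddCommGroup E] [NormedSpace 𝕜 E]
    [SeminormedAddCommGroup F] [NormedSpace 𝕜 F] {C : ℝ} (hC : 0 ≤ C) (f : E →L[𝕜] F) {x : E}
    (h : ‖x‖ ^ 2 ≤ C * ‖f x‖) : ‖x‖ ≤ C * ‖f‖ := by
  refine le_of_sq_le_mul (by positivity) ?_
  calc ‖x‖ ^ 2 ≤ C * ‖f x‖ := h
    _ ≤ C * (‖f‖ * ‖x‖) := by gcongr; exact f.le_opNorm x
    _ = C * ‖f‖ * ‖x‖ := by ring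

theorem add_le_two_mul_add_of_sq_add_sq_le {R : Type*} [CommRing R] [LinearOrder R]
    [IsStrictOrderedRing R] {x y p q : R} (hx : 0 ≤ x) (hy : 0 ≤ y) (hp : 0 ≤ p)
    (hq : 0 ≤ q) (h : x ^ 2 + y ^ 2 ≤ p * x + q * y) : x + y ≤ 2 * (p + q) := by
  refine le_of_sq_le_mul (by positivity) ?_
  calc (x + y) ^ 2 ≤ 2 * (x ^ 2 + y ^ 2) := add_sq_le
    _ ≤ 2 * (p * x + q * y) := by gcongr
    _ ≤ 2 * (p * (x + y) + q * (x + y)) := by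
        gcongr
        · exact le_add_of_nonneg_right hy
        · exact le_add_of_nonneg_left hx
    _ = 2 * (p + q) * (x + y) := by ring

theorem add_le_two_mul_of_inv_sq_mul_sq_add_le {R : Type*} [Field R] [LinearOrder R]
    [IsStrictOrderedRing R] {x y p q α β ζ : R} (hα : 0 < α) (hβ : 0 < β)
    (hαζ : α ≤ ζ) (hβζ : β ≤ ζ) (hx : 0 ≤ x) (hy : 0 ≤ y) (hp : 0 ≤ p) (hq : 0 ≤ q)
    (h : α⁻¹ ^ 2 * x ^ 2 + β⁻¹ ^ 2 * y ^ 2 ≤ p * x + q * y) :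
    x + y ≤ 2 * ζ * (α * p + β * q) := by
  have hζ : 0 ≤ ζ := hα.le.trans hαζ
  have rescaled : (α⁻¹ * x) ^ 2 + (β⁻¹ * y) ^ 2 ≤ α * p * (α⁻¹ * x) + β * q * (β⁻¹ * y) := by
    convert h using 1 <;> field_simp
  have rescaled_le : α⁻¹ * x + β⁻¹ * y ≤ 2 * (α * p + β * q) :=
    add_le_two_mul_add_of_sq_add_sq_le (by positivity) (by positivity) (by positivity)
      (by positivity) rescaled
  calc x + y = α * (α⁻¹ * x) + β * (β⁻¹ * y) := by field_simp
    _ ≤ ζ * (α⁻¹ * x) + ζ * (β⁻¹ * y) := by gcongr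
    _ = ζ * (α⁻¹ * x + β⁻¹ * y) := by ring
    _ ≤ ζ * (2 * (α * p + β * q)) := by gcongr
    _ = 2 * ζ * (α * p + β * q) := by ring

theorem reduced_HDG_solution_a_priori_bounds_general
    {V W Z : Type*}
    [SeminormedAddCommGroup V] [NormedSpace ℝ V]
    [SeminormedAddCommGroup W] [NormedSpace ℝ W]
    [SeminormedAddCommGroup Z] [NormedSpace ℝ Z]
    {Ha Rm Pr Re γ ζ : ℝ}
    (hHa : 0 < Ha) (hRm : 0 < Rm) (hPr : 0 < Pr) (hRe : 0 < Re) (hγ : 0 ≤ γ)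
    (hζ : ζ = max (max Ha Rm) (Ha * Pr * Re * γ))
    (aV : V → V → ℝ) (aW : W → W → ℝ) (aZ : Z → Z → ℝ)
    (haV_coer : ∀ v : V, Ha⁻¹ ^ 2 * ‖v‖ ^ 2 ≤ aV v v)
    (haW_coer : ∀ w : W, Rm⁻¹ ^ 2 * ‖w‖ ^ 2 ≤ aW w w)
    (haZ_coer : ∀ z : Z, (Pr * Re)⁻¹ * ‖z‖ ^ 2 ≤ aZ z z)
    (c₁ : V → V → V → ℝ) (c₂ : V → W → W → ℝ) (c₃ : V → Z → Z → ℝ)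
    (hc₁_skew : ∀ φ v : V, c₁ φ v v = 0)
    (hc₃_skew : ∀ (u : V) (z : Z), c₃ u z z = 0)
    (G : Z → V → ℝ)
    (hG_bound : ∀ (T : Z) (v : V), |G T v| ≤ γ * ‖T‖ * ‖v‖)
    (f₁ : V →L[ℝ] ℝ) (f₂ : W →L[ℝ] ℝ) (f₃ : Z →L[ℝ] ℝ)
    {U : V} {B : W} {T : Z}
    (hUB : ∀ (v : V) (w : W),
      aV U v + aW B w + c₁ U U v + c₂ v B B - c₂ U B w = f₁ v + f₂ w - G T v)
    (hT : ∀ z : Z, aZ T z + c₃ U T z = f₃ z) :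
    ‖U‖ + ‖B‖ ≤ 2 * ζ ^ 2 * (‖f₁‖ + ‖f₂‖ + ‖f₃‖) ∧ ‖T‖ ≤ Pr * Re * ‖f₃‖ := by
  obtain ⟨⟨hHaζ, hRmζ⟩, hγζ⟩ : (Ha ≤ ζ ∧ Rm ≤ ζ) ∧ Ha * Pr * Re * γ ≤ ζ := by
    simpa only [max_le_iff] using hζ.ge
  have hζ_nonneg : 0 ≤ ζ := hHa.le.trans hHaζ
  have temperature_energy : aZ T T = f₃ T := by simpa only [hc₃_skew, add_zero] using hT T
  have temperature_le : ‖T‖ ≤ Pr * Re * ‖f₃‖ := by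
    refine norm_le_mul_opNorm_of_norm_sq_le_mul_norm_apply (by positivity) f₃ ?_
    rw [← inv_mul_le_iff₀ (by positivity)]
    exact (haZ_coer T).trans (temperature_energy.trans_le (Real.le_norm_self _))
  have energy : aV U U + aW B B = f₁ U + f₂ B - G T U := by
    simpa only [hc₁_skew, add_zero, add_sub_cancel_right] using hUB U B
  have energy_le : Ha⁻¹ ^ 2 * ‖U‖ ^ 2 + Rm⁻¹ ^ 2 * ‖B‖ ^ 2 ≤
      (‖f₁‖ + γ * ‖T‖) * ‖U‖ + ‖f₂‖ * ‖B‖ := by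
    linarith [haV_coer U, haW_coer B, (Real.le_norm_self _).trans (f₁.le_opNorm U),
      (Real.le_norm_self _).trans (f₂.le_opNorm B), (neg_le_abs _).trans (hG_bound T U)]
  have data_le : Ha * (‖f₁‖ + γ * ‖T‖) + Rm * ‖f₂‖ ≤ ζ * (‖f₁‖ + ‖f₂‖ + ‖f₃‖) :=
    calc Ha * (‖f₁‖ + γ * ‖T‖) + Rm * ‖f₂‖
        ≤ Ha * (‖f₁‖ + γ * (Pr * Re * ‖f₃‖)) + Rm * ‖f₂‖ := by gcongr
      _ = Ha * ‖f₁‖ + Rm * ‖f₂‖ + Ha * Pr * Re * γ * ‖f₃‖ := by ring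
      _ ≤ ζ * ‖f₁‖ + ζ * ‖f₂‖ + ζ * ‖f₃‖ := by gcongr
      _ = ζ * (‖f₁‖ + ‖f₂‖ + ‖f₃‖) := by ring
  refine ⟨?_, temperature_le⟩
  calc ‖U‖ + ‖B‖ ≤ 2 * ζ * (Ha * (‖f₁‖ + γ * ‖T‖) + Rm * ‖f₂‖) :=
        add_le_two_mul_of_inv_sq_mul_sq_add_le hHa hRm hHaζ hRmζ (norm_nonneg U) (norm_nonneg B)
          (by positivity) (norm_nonneg f₂) energy_le
    _ ≤ 2 * ζ * (ζ * (‖f₁‖ + ‖f₂‖ + ‖f₃‖)) := by gcongr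
    _ = 2 * ζ ^ 2 * (‖f₁‖ + ‖f₂‖ + ‖f₃‖) := by ring

/-- Abstract version of the stability bounds (4.7)–(4.8) of Lemma 4.3: every
solution `(U,B,T)` of the reduced HDG system satisfies
`‖U‖ + ‖B‖ ≤ 2ζ²(‖f₁‖ + ‖f₂‖ + ‖f₃‖)` and `‖T‖ ≤ Pr·Re·‖f₃‖`,
where `ζ = max{Ha, Rm, Ha·Pr·Re·γ}`. -/
theorem reduced_HDG_solution_a_priori_bounds
    {V W Z : Type*}
    [NormedAddCommGroup V] [InnerProductSpace ℝ V] [FiniteDimensional ℝ V]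
    [NormedAddCommGroup W] [InnerProductSpace ℝ W] [FiniteDimensional ℝ W]
    [NormedAddCommGroup Z] [InnerProductSpace ℝ Z] [FiniteDimensional ℝ Z]
    (Ha Rm Pr Re γ ζ : ℝ)
    (hHa : 0 < Ha) (hRm : 0 < Rm) (hPr : 0 < Pr) (hRe : 0 < Re) (hγ : 0 < γ)
    (hζ : ζ = max (max Ha Rm) (Ha * Pr * Re * γ))
    (aV : V →ₗ[ℝ] V →ₗ[ℝ] ℝ) (aW : W →ₗ[ℝ] W →ₗ[ℝ] ℝ) (aZ : Z →ₗ[ℝ] Z →ₗ[ℝ] ℝ)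
    (haV_symm : ∀ v₁ v₂ : V, aV v₁ v₂ = aV v₂ v₁)
    (haW_symm : ∀ w₁ w₂ : W, aW w₁ w₂ = aW w₂ w₁)
    (haZ_symm : ∀ z₁ z₂ : Z, aZ z₁ z₂ = aZ z₂ z₁)
    (haV_coer : ∀ v : V, Ha⁻¹ ^ 2 * ‖v‖ ^ 2 ≤ aV v v)
    (haW_coer : ∀ w : W, Rm⁻¹ ^ 2 * ‖w‖ ^ 2 ≤ aW w w)
    (haZ_coer : ∀ z : Z, (Pr * Re)⁻¹ * ‖z‖ ^ 2 ≤ aZ z z)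
    (c₁ : V →ₗ[ℝ] V →ₗ[ℝ] V →ₗ[ℝ] ℝ)
    (c₂ : V →ₗ[ℝ] W →ₗ[ℝ] W →ₗ[ℝ] ℝ)
    (c₃ : V →ₗ[ℝ] Z →ₗ[ℝ] Z →ₗ[ℝ] ℝ)
    (hc₁_skew : ∀ (φ v : V), c₁ φ v v = 0)
    (hc₃_skew : ∀ (u : V) (z : Z), c₃ u z z = 0)
    (G : Z →ₗ[ℝ] V →ₗ[ℝ] ℝ)
    (hG_bound : ∀ (T : Z) (v : V), |G T v| ≤ γ * ‖T‖ * ‖v‖)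
    (f₁ : V →L[ℝ] ℝ) (f₂ : W →L[ℝ] ℝ) (f₃ : Z →L[ℝ] ℝ)
    (U : V) (B : W) (T : Z)
    (hUB : ∀ (v : V) (w : W),
      aV U v + aW B w + c₁ U U v + c₂ v B B - c₂ U B w
        = f₁ v + f₂ w - G T v)
    (hT : ∀ z : Z, aZ T z + c₃ U T z = f₃ z) :
    ‖U‖ + ‖B‖ ≤ 2 * ζ ^ 2 * (‖f₁‖ + ‖f₂‖ + ‖f₃‖) ∧
      ‖T‖ ≤ Pr * Re * ‖f₃‖ :=
  reduced_HDG_solution_a_priori_bounds_general hHa hRm hPr hRe hγ.le hζ (aV · ·) (aW · ·) (aZ · ·)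
    haV_coer haW_coer haZ_coer (c₁ · · ·) (c₂ · · ·) (c₃ · · ·) hc₁_skew hc₃_skew (G · ·) hG_bound
    f₁ f₂ f₃ hUB hT
end

section
/- The reduced HDG system admits at least one solution (U,B,T) ∈ V×W×Z. (Abstract finite-dimensional version of the existence assertion of Lemma 4.3, proved in the paper via Schaefer's fixed point theorem.) -/
/-!
Test the system with `(U, B)` and the temperature equation with `l • T`. The convective terms
cancel, and a large weight `l` absorbs the buoyancy coupling `G`, so what remains is a positive
definite form: the combined operator is a smooth vector field `F` pointing outwards on large
spheres. If `F` had no zero, then, after replacing `F` by the identity near such a sphere, `F / ‖F‖`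
would be a `C¹` retraction `r` of the ball onto its boundary.

No such retraction exists (Milnor, Rogers): with `g = r - id`, the map `id + t g` is, for small `t`,
a diffeomorphism of the ball onto itself, so `∫ det (1 + t Dg)` equals the volume of the ball.
This integral is a polynomial in `t`, hence it is constant; but at `t = 1` it vanishes since
`det Dr = 0`.
-/

open Bornology Filter MeasureTheory Metric Module Polynomial Set Topology
open LinearMap (fst snd)
open scoped NNReal RealInnerProductSpace

theorem integral_eval_eq_of_infinite {α : Type*} [MeasurableSpace α] {μ : Measure α}
    {p : α → ℝ[X]} {n : ℕ} {c : ℝ} {S : Set ℝ} (hdeg : ∀ x, (p x).natDegree ≤ n)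
    (hS : S.Infinite) (hint : ∀ t ∈ S, Integrable (fun x ↦ (p x).eval t) μ)
    (hc : ∀ t ∈ S, ∫ x, (p x).eval t ∂μ = c) (t : ℝ) : ∫ x, (p x).eval t ∂μ = c := by
  obtain ⟨s, hsS, hcard⟩ := hS.exists_subset_card_eq (n + 1)
  have hinj : InjOn id (s : Set ℝ) := injOn_id _
  have hinterp (x : α) :
      (p x).eval t = ∑ i ∈ s, (p x).eval i * (Lagrange.basis s id i).eval t := by
    have hlt : (p x).degree < s.card :=
      degree_lt_iff_coeff_zero _ _ |>.2 fun m hm ↦ coeff_eq_zero_of_natDegree_lt (by grind)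
    conv_lhs => rw [Lagrange.eq_interpolate hinj hlt]
    simp [Lagrange.interpolate_apply, eval_finsetSum]
  calc ∫ x, (p x).eval t ∂μ
      = ∑ i ∈ s, (∫ x, (p x).eval i ∂μ) * (Lagrange.basis s id i).eval t := by
        simp only [hinterp]
        rw [integral_finsetSum _ fun i hi ↦ (hint i (hsS hi)).mul_const _]
        simp only [integral_mul_const]
    _ = c * (∑ i ∈ s, Lagrange.basis s id i).eval t := by
        rw [eval_finsetSum, Finset.mul_sum]
        exact Finset.sum_congr rfl fun i hi ↦ by rw [hc i (hsS hi)]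
    _ = c := by
        rw [Lagrange.sum_basis hinj (Finset.card_pos.1 (by omega)), eval_one, mul_one]

theorem exists_polynomial_eval_eq_matrix_det_one_add_smul {R n : Type*} [CommRing R] [Fintype n]
    [DecidableEq n] (A : Matrix n n R) :
    ∃ p : R[X], p.natDegree ≤ Fintype.card n ∧ ∀ t, p.eval t = (1 + t • A).det := by
  refine ⟨(X • A.map C + (1 : Matrix n n R).map C).det, natDegree_det_X_add_C_le A 1, fun t ↦ ?_⟩
  rw [← coe_evalRingHom, RingHom.map_det, add_comm]
  congr 1
  ext i j
  simp only [coe_evalRingHom, RingHom.mapMatrix_apply, Matrix.map_apply, Matrix.add_apply,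
    Matrix.smul_apply, smul_eq_mul, eval_add, eval_mul, eval_X, eval_C]

theorem exists_polynomial_eval_eq_det_one_add_smul {R M : Type*} [CommRing R] [Nontrivial R]
    [AddCommGroup M] [Module R M] [Module.Free R M] [Module.Finite R M] (f : M →ₗ[R] M) :
    ∃ p : R[X], p.natDegree ≤ finrank R M ∧ ∀ t, p.eval t = (1 + t • f).det := by
  obtain ⟨p, hp_deg, hp⟩ :=
    exists_polynomial_eval_eq_matrix_det_one_add_smul (f.toMatrix (finBasis R M) (finBasis R M))
  refine ⟨p, hp_deg.trans_eq (Fintype.card_fin _), fun t ↦ ?_⟩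
  rw [hp, ← LinearMap.det_toMatrix (finBasis R M), map_add, map_smul, LinearMap.toMatrix_one]

section Normed

variable {E : Type*} [NormedAddCommGroup E] [NormedSpace ℝ E] {K : Set E}

section Complete

variable [CompleteSpace E] {g : E → E} {c : ℝ≥0}

theorem bijective_add_of_lipschitzWith (hg : LipschitzWith c g) (hc : c < 1) :
    Function.Bijective fun x ↦ x + g x := by
  have happrox : ApproximatesLinearOn (fun x ↦ x + g x)
      (ContinuousLinearEquiv.refl ℝ E : E →L[ℝ] E) univ c := by
    rw [ApproximatesLinearOn.approximatesLinearOn_iff_lipschitzOnWith, lipschitzOnWith_univ]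
    convert hg using 1
    ext x
    simp
  have hcN : Subsingleton E ∨ c < ‖((ContinuousLinearEquiv.refl ℝ E).symm : E →L[ℝ] E)‖₊⁻¹ := by
    rcases subsingleton_or_nontrivial E with hE | hE
    · exact .inl hE
    · right
      simpa using hc
  exact ⟨injOn_univ.1 (happrox.injOn hcN), happrox.surjective hcN⟩

theorem image_add_eq_of_lipschitzWith (hg : LipschitzWith c g) (hc : c < 1)
    (hgK : ∀ x ∉ K, g x = 0) : (fun x ↦ x + g x) '' K = K := by
  have himage_compl : (fun x ↦ x + g x) '' Kᶜ = Kᶜ :=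
    (image_congr fun x hx ↦ by rw [hgK x hx, add_zero]).trans (image_id' _)
  rw [← compl_inj_iff, ← image_compl_eq (bijective_add_of_lipschitzWith hg hc), himage_compl]

end Complete

variable [FiniteDimensional ℝ E]

theorem lipschitzWith_indicator_of_frontier {F : Type*} [NormedAddCommGroup F] {g : E → F} {L : ℝ≥0}
    (hg : LipschitzOnWith L g K) (hK : IsClosed K) (hg₀ : ∀ x ∈ frontier K, g x = 0) :
    LipschitzWith L (K.indicator g) := by
  have dist_le {x y : E} (hx : x ∈ K) (hy : y ∉ K) :
      dist (K.indicator g x) (K.indicator g y) ≤ L * dist x y := by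
    obtain ⟨z, hz, hxz⟩ :=
      exists_mem_frontier_infDist_compl_eq_dist hx fun h ↦ hy (h ▸ mem_univ y)
    rw [indicator_of_mem hx, indicator_of_notMem hy, ← hg₀ z hz]
    calc dist (g x) (g z) ≤ L * dist x z := hg.dist_le_mul x hx z (hK.frontier_subset hz)
      _ ≤ L * dist x y := by
        rw [← hxz]
        gcongr
        exact infDist_le_dist_of_mem hy
  refine .of_dist_le_mul fun x y ↦ ?_
  by_cases hx : x ∈ K <;> by_cases hy : y ∈ K
  · simpa only [indicator_of_mem, hx, hy] using hg.dist_le_mul x hx y hy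
  · exact dist_le hx hy
  · simpa only [dist_comm] using dist_le hy hx
  · rw [indicator_of_notMem hx, indicator_of_notMem hy, dist_self]
    positivity

variable [MeasurableSpace E] [BorelSpace E] (μ : Measure E) [μ.IsAddHaarMeasure]

theorem setIntegral_det_eq_of_injOn_of_image_eq (hK : MeasurableSet K) {f : E → E}
    {f' : E → E →L[ℝ] E} (hf' : ∀ x ∈ K, HasFDerivWithinAt f (f' x) K x)
    (hpos : ∀ x ∈ K, 0 < (f' x).det) (hinj : InjOn f K) (himage : f '' K = K) :
    ∫ x in K, (f' x).det ∂μ = μ.real K := by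
  have hcov := integral_image_eq_integral_abs_det_fderiv_smul μ hK hf' hinj fun _ ↦ (1 : ℝ)
  rw [himage, setIntegral_const, smul_eq_mul, mul_one] at hcov
  rw [hcov]
  exact setIntegral_congr_fun hK fun x hx ↦ by rw [abs_of_pos (hpos x hx), smul_eq_mul, mul_one]

theorem eventually_setIntegral_det_one_add_smul_fderiv {g : E → E} (hK : IsCompact K)
    (hg : ContDiff ℝ 1 g) (hg₀ : ∀ x ∈ frontier K, g x = 0) :
    ∀ᶠ t : ℝ in 𝓝 0, ∫ x in K, (1 + t • fderiv ℝ g x).det ∂μ = μ.real K := by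
  obtain ⟨L, hL⟩ := hg.locallyLipschitz.locallyLipschitzOn.exists_lipschitzOnWith_of_compact hK
  have hLip : LipschitzWith L (K.indicator g) :=
    lipschitzWith_indicator_of_frontier hL hK.isClosed hg₀
  have hcont : Continuous fun q : ℝ × E ↦ (1 + q.1 • fderiv ℝ g q.2).det := by
    have := hg.continuous_fderiv one_ne_zero
    exact ContinuousLinearMap.continuous_det.comp (by fun_prop)
  have hdet_pos : ∀ᶠ t : ℝ in 𝓝 0, ∀ x ∈ K, 0 < (1 + t • fderiv ℝ g x).det := by
    refine hK.eventually_forall_of_forall_eventually fun x _ ↦ ?_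
    exact hcont.continuousAt.eventually_const_lt (by simp [ContinuousLinearMap.det])
  have hsmall : ∀ᶠ t : ℝ in 𝓝 0, ‖t‖₊ * L < 1 :=
    (by fun_prop : Continuous fun t : ℝ ↦ ‖t‖₊ * L).continuousAt.eventually_lt_const (by simp)
  filter_upwards [hdet_pos, hsmall] with t hpos ht
  have hf' (x : E) : HasFDerivAt (fun x ↦ x + t • g x) (1 + t • fderiv ℝ g x) x :=
    (hasFDerivAt_id x).add (((hg.differentiable one_ne_zero) x).hasFDerivAt.const_smul t)
  -- Extending `t • g` by zero off `K` makes it a small perturbation of the identity on all of `E`.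
  have htLip : LipschitzWith (‖t‖₊ * L) (t • K.indicator g) := (lipschitzWith_smul t).comp hLip
  have heqOn : EqOn (fun x ↦ x + (t • K.indicator g) x) (fun x ↦ x + t • g x) K :=
    fun x hx ↦ by simp [hx]
  refine setIntegral_det_eq_of_injOn_of_image_eq μ hK.measurableSet
    (fun x _ ↦ (hf' x).hasFDerivWithinAt) hpos ?_ ?_
  · exact ((bijective_add_of_lipschitzWith htLip ht).injective.injOn).congr heqOn
  · rw [← heqOn.image_eq]
    exact image_add_eq_of_lipschitzWith htLip ht fun x hx ↦ by simp [hx]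

theorem setIntegral_det_fderiv_eq_of_eqOn_frontier (hK : IsCompact K) {f : E → E}
    (hf : ContDiff ℝ 1 f) (hfK : ∀ x ∈ frontier K, f x = x) :
    ∫ x in K, (fderiv ℝ f x).det ∂μ = μ.real K := by
  let g : E → E := fun x ↦ f x - x
  have hg : ContDiff ℝ 1 g := hf.sub contDiff_id
  have hfg (x : E) : fderiv ℝ f x = 1 + (1 : ℝ) • fderiv ℝ g x := by
    have hg' : HasFDerivAt g (fderiv ℝ f x - 1) x :=
      (hf.differentiable one_ne_zero x).hasFDerivAt.sub (hasFDerivAt_id x)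
    rw [one_smul, hg'.fderiv]
    exact (add_sub_cancel _ _).symm
  choose p hp_deg hp_eval using fun x ↦
    exists_polynomial_eval_eq_det_one_add_smul (fderiv ℝ g x : E →ₗ[ℝ] E)
  have hp (t : ℝ) (x : E) : (p x).eval t = (1 + t • fderiv ℝ g x).det := hp_eval x t
  have hcont (t : ℝ) : Continuous fun x ↦ (p x).eval t := by
    have := hg.continuous_fderiv one_ne_zero
    simp only [hp]
    exact ContinuousLinearMap.continuous_det.comp (by fun_prop)
  have hsmall := eventually_setIntegral_det_one_add_smul_fderiv μ hK hg
    fun x hx ↦ sub_eq_zero.2 (hfK x hx)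
  simp only [← hp] at hsmall
  simp only [hfg, ← hp]
  exact integral_eval_eq_of_infinite hp_deg (infinite_of_mem_nhds 0 hsmall)
    (fun t _ ↦ (hcont t).continuousOn.integrableOn_compact hK) (fun _ ht ↦ ht) 1

end Normed

section Inner

variable {E : Type*} [NormedAddCommGroup E] [InnerProductSpace ℝ E] [FiniteDimensional ℝ E] {ρ : ℝ}

theorem det_eq_zero_of_hasFDerivAt_of_norm_eq {r : E → E} {r' : E →L[ℝ] E} {x : E}
    (hr : HasFDerivAt r r' x) (hρ : ρ ≠ 0) (hnorm : ∀ᶠ y in 𝓝 x, ‖r y‖ = ρ) : r'.det = 0 := by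
  by_contra hdet
  have hunit : IsUnit (r' : E →ₗ[ℝ] E) :=
    (LinearMap.isUnit_iff_isUnit_det _).2 (isUnit_iff_ne_zero.2 hdet)
  have hsurj : Function.Surjective r' := ((Module.End.isUnit_iff _).1 hunit).2
  obtain ⟨v, hv⟩ := hsurj (r x)
  have hconst : HasFDerivAt (fun y ↦ ‖r y‖ ^ 2) (0 : E →L[ℝ] ℝ) x :=
    (hasFDerivAt_const (ρ ^ 2) x).congr_of_eventuallyEq (hnorm.mono fun y hy ↦ by simp only [hy])
  have hderiv := DFunLike.congr_fun (hr.norm_sq.unique hconst) v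
  simp [hv, hnorm.self_of_nhds, hρ] at hderiv

theorem exists_mem_sphere_ne_of_norm_eq {r : E → E} (hr : ContDiff ℝ 1 r) (hρ : 0 < ρ)
    (hnorm : ∀ x, ‖r x‖ = ρ) : ∃ x ∈ sphere (0 : E) ρ, r x ≠ x := by
  by_contra! hid
  borelize E
  let μ : Measure E := Measure.addHaar
  have hvol := setIntegral_det_fderiv_eq_of_eqOn_frontier μ (isCompact_closedBall (0 : E) ρ) hr
    (by rwa [frontier_closedBall _ hρ.ne'])
  have hdet (x : E) : (fderiv ℝ r x).det = 0 :=
    det_eq_zero_of_hasFDerivAt_of_norm_eq (hr.differentiable one_ne_zero x).hasFDerivAt hρ.ne'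
      (.of_forall hnorm)
  have hball : 0 < μ.real (closedBall 0 ρ) :=
    ENNReal.toReal_pos (measure_closedBall_pos μ 0 hρ).ne' measure_closedBall_lt_top.ne
  simp only [hdet, integral_zero] at hvol
  exact hball.ne hvol

theorem exists_contDiff_eqOn_sphere_of_inner_pos {F : E → E} (hF : ContDiff ℝ 1 F)
    (hpos : ∀ᶠ x in cobounded E, 0 < ⟪F x, x⟫) :
    ∃ ρ > 0, ∃ H : E → E, ContDiff ℝ 1 H ∧ EqOn H id (sphere 0 ρ) ∧
      ∀ x, H x = 0 → F x = 0 := by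
  obtain ⟨R₀, -, hR₀⟩ := hasBasis_cobounded_norm.eventually_iff.1 hpos
  let R := max R₀ 1
  have hR : 0 < R := lt_max_of_lt_right one_pos
  let χ : ContDiffBump (0 : E) := ⟨R, 2 * R, hR, by linarith⟩
  refine ⟨2 * R, by positivity, fun x ↦ (1 - χ x) • x + χ x • F x,
    ((contDiff_const.sub χ.contDiff).smul contDiff_id).add (χ.contDiff.smul hF), ?_, ?_⟩
  · intro x hx
    have hχ : χ x = 0 := χ.zero_of_le_dist (mem_sphere.1 hx).ge
    simp [hχ]
  · intro x (hx : (1 - χ x) • x + χ x • F x = 0)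
    rcases le_or_gt ‖x‖ R with hxR | hxR
    · have hχ : χ x = 1 := χ.one_of_mem_closedBall (mem_closedBall_zero_iff.2 hxR)
      simpa [hχ] using hx
    · have hx_pos : 0 < ⟪x, x⟫ := real_inner_self_pos.2 (norm_pos_iff.1 (hR.trans hxR))
      have hFx_pos : 0 < ⟪F x, x⟫ := hR₀ ((le_max_left _ _).trans hxR.le)
      have hcomb : 0 < (1 - χ x) * ⟪x, x⟫ + χ x * ⟪F x, x⟫ :=
        convex_Ioi (0 : ℝ) hx_pos hFx_pos (sub_nonneg.2 χ.le_one) χ.nonneg (sub_add_cancel _ _)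
      rw [← real_inner_smul_left, ← real_inner_smul_left, ← inner_add_left, hx,
        inner_zero_left] at hcomb
      exact absurd hcomb (lt_irrefl 0)

theorem exists_eq_zero_of_inner_pos {F : E → E} (hF : ContDiff ℝ 1 F)
    (hpos : ∀ᶠ x in cobounded E, 0 < ⟪F x, x⟫) : ∃ x, F x = 0 := by
  obtain ⟨ρ, hρ, H, hH, hid, hzero⟩ := exists_contDiff_eqOn_sphere_of_inner_pos hF hpos
  by_contra! hF₀
  have hH₀ (x : E) : H x ≠ 0 := mt (hzero x) (hF₀ x)
  have hr : ContDiff ℝ 1 fun x ↦ (ρ / ‖H x‖) • H x :=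
    (contDiff_const.div (hH.norm ℝ hH₀) fun x ↦ norm_ne_zero_iff.2 (hH₀ x)).smul hH
  obtain ⟨x, hx, hne⟩ := exists_mem_sphere_ne_of_norm_eq hr hρ fun x ↦ by
    rw [norm_smul, norm_div, norm_norm, div_mul_cancel₀ _ (norm_ne_zero_iff.2 (hH₀ x)),
      Real.norm_of_nonneg hρ.le]
  refine hne ?_
  rw [hid hx, id, mem_sphere_zero_iff_norm.1 hx, div_self hρ.ne', one_smul]

theorem exists_add_eq_of_isCoercive {A : E →L[ℝ] E →L[ℝ] ℝ} (hA : IsCoercive A)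
    {N : E → E →L[ℝ] ℝ} (hN : ContDiff ℝ 1 N) (hN₀ : ∀ x, 0 ≤ N x x) (f : E →L[ℝ] ℝ) :
    ∃ x, A x + N x = f := by
  obtain ⟨c, hc, hcA⟩ := hA
  let J := (InnerProductSpace.toDual ℝ E).symm
  have hF : ContDiff ℝ 1 fun x ↦ J (A x + N x - f) :=
    J.contDiff.comp ((A.contDiff.add hN).sub contDiff_const)
  have hpos : ∀ᶠ x in cobounded E, 0 < ⟪J (A x + N x - f), x⟫ := by
    filter_upwards [tendsto_norm_cobounded_atTop.eventually_gt_atTop (‖f‖ / c)] with x hx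
    have hx₀ : 0 < ‖x‖ := hx.trans_le' (by positivity)
    have hlt : ‖f‖ * ‖x‖ < c * ‖x‖ * ‖x‖ := by
      gcongr
      rwa [mul_comm, ← div_lt_iff₀ hc]
    have hfx : f x ≤ ‖f‖ * ‖x‖ := (le_abs_self _).trans (f.le_opNorm x)
    simp only [J, InnerProductSpace.toDual_symm_apply, sub_apply, add_apply]
    linarith [hcA x, hN₀ x]
  obtain ⟨x, hx⟩ := exists_eq_zero_of_inner_pos hF hpos
  exact ⟨x, sub_eq_zero.1 (J.map_eq_zero_iff.1 hx)⟩

end Inner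

theorem exists_forall_apply_self_le_mul_norm_sq {E : Type*} [NormedAddCommGroup E] [NormedSpace ℝ E]
    [FiniteDimensional ℝ E] (B : E →ₗ[ℝ] E →ₗ[ℝ] ℝ) : ∃ C > 0, ∀ x, B x x ≤ C * ‖x‖ ^ 2 := by
  refine ⟨‖B.toContinuousBilinearMap‖ + 1, by positivity, fun x ↦ ?_⟩
  calc B x x ≤ ‖B.toContinuousBilinearMap‖ * ‖x‖ * ‖x‖ :=
        (le_abs_self _).trans (B.toContinuousBilinearMap.le_opNorm₂ x x)
    _ ≤ (‖B.toContinuousBilinearMap‖ + 1) * ‖x‖ ^ 2 := by nlinarith [sq_nonneg ‖x‖]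

section Forms

variable {P Z : Type*} [AddCommGroup P] [Module ℝ P] [AddCommGroup Z] [Module ℝ Z]
  {A : P →ₗ[ℝ] P →ₗ[ℝ] ℝ} {D : Z →ₗ[ℝ] Z →ₗ[ℝ] ℝ}

theorem apply_self_nonneg_of_pos (hA : ∀ x ≠ 0, 0 < A x x) (x : P) : 0 ≤ A x x := by
  rcases eq_or_ne x 0 with rfl | hx
  · simp
  · exact (hA x hx).le

theorem apply_self_add_apply_self_pos (hA : ∀ x ≠ 0, 0 < A x x) (hD : ∀ z ≠ 0, 0 < D z z)
    (p : P × Z) (hp : p ≠ 0) : 0 < A p.1 p.1 + D p.2 p.2 := by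
  rcases not_and_or.1 (mt Prod.ext_iff.2 hp) with h | h
  · exact add_pos_of_pos_of_nonneg (hA _ h) (apply_self_nonneg_of_pos hD _)
  · exact add_pos_of_nonneg_of_pos (apply_self_nonneg_of_pos hA _) (hD _ h)

/-- The symmetric part of a positive definite bilinear form `A`, as an inner product. Its norm
satisfies `‖x‖ ^ 2 = A x x`. -/
noncomputable abbrev innerCoreOfPosDef (A : P →ₗ[ℝ] P →ₗ[ℝ] ℝ) (hA : ∀ x ≠ 0, 0 < A x x) :
    InnerProductSpace.Core ℝ P where
  inner x y := (A x y + A y x) / 2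
  conj_inner_symm x y := by simp [add_comm]
  re_inner_nonneg x := by simpa using apply_self_nonneg_of_pos hA x
  add_left x y z := by simp only [map_add, LinearMap.add_apply]; ring
  smul_left x y r := by
    simp only [map_smul, LinearMap.smul_apply, smul_eq_mul, conj_trivial]
    ring
  definite x hx := by
    by_contra hne
    exact (hA x hne).ne' ((add_self_div_two _).symm.trans hx)

variable [FiniteDimensional ℝ P]

theorem exists_forall_apply_self_le (hA : ∀ x ≠ 0, 0 < A x x) (B : P →ₗ[ℝ] P →ₗ[ℝ] ℝ) :
    ∃ C > 0, ∀ x, B x x ≤ C * A x x := by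
  let _ : NormedAddCommGroup P := (innerCoreOfPosDef A hA).toNormedAddCommGroup
  let _ : InnerProductSpace ℝ P := InnerProductSpace.ofCore (innerCoreOfPosDef A hA).toCore
  have hnorm (x : P) : ‖x‖ ^ 2 = A x x := by
    rw [← real_inner_self_eq_norm_sq]
    exact add_self_div_two _
  obtain ⟨C, hC, hB⟩ := exists_forall_apply_self_le_mul_norm_sq B
  exact ⟨C, hC, fun x ↦ (hB x).trans_eq (by rw [hnorm])⟩

theorem exists_forall_apply_add_apply_apply_eq (hA : ∀ x ≠ 0, 0 < A x x)
    {C : P →ₗ[ℝ] P →ₗ[ℝ] P →ₗ[ℝ] ℝ} (hC : ∀ x, C x x x = 0) (f : P →ₗ[ℝ] ℝ) :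
    ∃ x, ∀ y, A x y + C x x y = f y := by
  let _ : NormedAddCommGroup P := (innerCoreOfPosDef A hA).toNormedAddCommGroup
  let _ : InnerProductSpace ℝ P := InnerProductSpace.ofCore (innerCoreOfPosDef A hA).toCore
  have hcoercive : IsCoercive A.toContinuousBilinearMap := by
    refine ⟨1, one_pos, fun x ↦ ?_⟩
    rw [one_mul, ← real_inner_self_eq_norm_mul_norm]
    exact (add_self_div_two _).le
  have hsmooth : ContDiff ℝ 1 fun x ↦ (C x x).toContinuousLinearMap := by
    refine contDiff_clm_apply_iff.2 fun y ↦ ?_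
    let Cy := (C.compr₂ (LinearMap.applyₗ y)).toContinuousBilinearMap
    exact Cy.contDiff.clm_apply contDiff_id
  obtain ⟨x, hx⟩ := exists_add_eq_of_isCoercive hcoercive hsmooth (fun x ↦ (hC x).ge)
    f.toContinuousLinearMap
  exact ⟨x, DFunLike.congr_fun hx⟩

variable [FiniteDimensional ℝ Z]

theorem exists_forall_add_add_mul_pos (hA : ∀ x ≠ 0, 0 < A x x) (hD : ∀ z ≠ 0, 0 < D z z)
    (G : Z →ₗ[ℝ] P →ₗ[ℝ] ℝ) :
    ∃ l > 0, ∀ p : P × Z, p ≠ 0 → 0 < A p.1 p.1 + G p.2 p.1 + l * D p.2 p.2 := by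
  obtain ⟨C, hC, hG⟩ := exists_forall_apply_self_le
    (A := A.compl₁₂ (fst ℝ P Z) (fst ℝ P Z) + D.compl₁₂ (snd ℝ P Z) (snd ℝ P Z))
    (apply_self_add_apply_self_pos hA hD) (-G.compl₁₂ (snd ℝ P Z) (fst ℝ P Z))
  refine ⟨2 * C ^ 2 + 1 / 2, by positivity, fun p hp ↦ ?_⟩
  have hyoung : -G p.2 p.1 ≤ 1 / 2 * A p.1 p.1 + 2 * C ^ 2 * D p.2 p.2 := by
    -- Rescaling the second component by `2 * C` makes the coefficient of `A` equal to `1 / 2`.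
    have hscaled : -(2 * C * G p.2 p.1) ≤ C * (A p.1 p.1 + 2 * C * (2 * C * D p.2 p.2)) := by
      simpa using hG (p.1, (2 * C) • p.2)
    refine le_of_mul_le_mul_left ?_ (by positivity : 0 < 2 * C)
    linarith
  linarith [apply_self_add_apply_self_pos hA hD p hp]

theorem exists_forall_coupled_eq (hA : ∀ x ≠ 0, 0 < A x x) (hD : ∀ z ≠ 0, 0 < D z z)
    {C : P →ₗ[ℝ] P →ₗ[ℝ] P →ₗ[ℝ] ℝ} (hC : ∀ x, C x x x = 0)
    {K : P →ₗ[ℝ] Z →ₗ[ℝ] Z →ₗ[ℝ] ℝ} (hK : ∀ x z, K x z z = 0)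
    (G : Z →ₗ[ℝ] P →ₗ[ℝ] ℝ) (f : P →ₗ[ℝ] ℝ) (g : Z →ₗ[ℝ] ℝ) :
    ∃ x z, (∀ y, A x y + C x x y = f y - G z y) ∧ ∀ y, D z y + K x z y = g y := by
  obtain ⟨l, hl, hpos⟩ := exists_forall_add_add_mul_pos hA hD G
  let a : P × Z →ₗ[ℝ] P × Z →ₗ[ℝ] ℝ :=
    (fst ℝ P Z).dualMap ∘ₗ A.coprod G + l • (snd ℝ P Z).dualMap ∘ₗ D ∘ₗ snd ℝ P Z
  let c : P × Z →ₗ[ℝ] P × Z →ₗ[ℝ] P × Z →ₗ[ℝ] ℝ :=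
    (C.compl₁₂ (fst ℝ P Z) (fst ℝ P Z)).compr₂ (fst ℝ P Z).dualMap +
      l • (K.compl₁₂ (fst ℝ P Z) (snd ℝ P Z)).compr₂ (snd ℝ P Z).dualMap
  have ha (p q : P × Z) : a p q = A p.1 q.1 + G p.2 q.1 + l * D p.2 q.2 := rfl
  have hc (p q r : P × Z) : c p q r = C p.1 q.1 r.1 + l * K p.1 q.2 r.2 := rfl
  obtain ⟨⟨x, z⟩, hxz⟩ := exists_forall_apply_add_apply_apply_eq (A := a) (C := c) hpos
    (fun p ↦ by rw [hc, hC, hK, mul_zero, add_zero]) (f.coprod (l • g))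
  refine ⟨x, z, fun y ↦ ?_, fun y ↦ ?_⟩
  · have htest : A x y + G z y + C x x y = f y := by simpa [ha, hc] using hxz (y, 0)
    linarith
  · have htest : l * D z y + l * K x z y = l * g y := by simpa [ha, hc] using hxz (0, y)
    exact mul_left_cancel₀ hl.ne' (by rwa [mul_add])

end Forms

theorem reduced_HDG_existence_general {V W Z : Type*}
    [AddCommGroup V] [Module ℝ V] [FiniteDimensional ℝ V]
    [AddCommGroup W] [Module ℝ W] [FiniteDimensional ℝ W]
    [AddCommGroup Z] [Module ℝ Z] [FiniteDimensional ℝ Z]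
    {aV : V →ₗ[ℝ] V →ₗ[ℝ] ℝ} {aW : W →ₗ[ℝ] W →ₗ[ℝ] ℝ} {aZ : Z →ₗ[ℝ] Z →ₗ[ℝ] ℝ}
    (haV : ∀ v ≠ 0, 0 < aV v v) (haW : ∀ w ≠ 0, 0 < aW w w) (haZ : ∀ z ≠ 0, 0 < aZ z z)
    {c₁ : V →ₗ[ℝ] V →ₗ[ℝ] V →ₗ[ℝ] ℝ} (c₂ : V →ₗ[ℝ] W →ₗ[ℝ] W →ₗ[ℝ] ℝ)
    {c₃ : V →ₗ[ℝ] Z →ₗ[ℝ] Z →ₗ[ℝ] ℝ}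
    (hc₁ : ∀ v, c₁ v v v = 0) (hc₃ : ∀ u z, c₃ u z z = 0)
    (G : Z →ₗ[ℝ] V →ₗ[ℝ] ℝ) (f₁ : V →ₗ[ℝ] ℝ) (f₂ : W →ₗ[ℝ] ℝ) (f₃ : Z →ₗ[ℝ] ℝ) :
    ∃ (U : V) (B : W) (T : Z),
      (∀ (v : V) (w : W),
        aV U v + aW B w + c₁ U U v + c₂ v B B - c₂ U B w = f₁ v + f₂ w - G T v) ∧
      (∀ z : Z, aZ T z + c₃ U T z = f₃ z) := by
  let a : V × W →ₗ[ℝ] V × W →ₗ[ℝ] ℝ :=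
    aV.compl₁₂ (fst ℝ V W) (fst ℝ V W) + aW.compl₁₂ (snd ℝ V W) (snd ℝ V W)
  let c : V × W →ₗ[ℝ] V × W →ₗ[ℝ] V × W →ₗ[ℝ] ℝ :=
    (c₁.compl₁₂ (fst ℝ V W) (fst ℝ V W)).compr₂ (fst ℝ V W).dualMap +
      ((LinearMap.lflip.toLinearMap ∘ₗ c₂.flip).compl₁₂ (snd ℝ V W) (snd ℝ V W)).compr₂
        (fst ℝ V W).dualMap +
      (c₂.compl₁₂ (fst ℝ V W) (snd ℝ V W)).compr₂ (-snd ℝ V W).dualMap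
  have ha (p q : V × W) : a p q = aV p.1 q.1 + aW p.2 q.2 := rfl
  have hc (p q r : V × W) :
      c p q r = c₁ p.1 q.1 r.1 + c₂ r.1 p.2 q.2 - c₂ p.1 q.2 r.2 := by
    simp [c, sub_eq_add_neg]
  have hc_self (p : V × W) : c p p p = 0 := by rw [hc, hc₁, zero_add, sub_self]
  obtain ⟨⟨U, B⟩, T, hUB, hT⟩ := exists_forall_coupled_eq (A := a) (K := c₃ ∘ₗ fst ℝ V W)
    (apply_self_add_apply_self_pos haV haW) haZ hc_self (fun p ↦ hc₃ p.1)
    (G.compl₂ (fst ℝ V W)) (f₁.coprod f₂) f₃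
  refine ⟨U, B, T, fun v w ↦ ?_, hT⟩
  have htest : aV U v + aW B w + (c₁ U U v + c₂ v B B - c₂ U B w) = f₁ v + f₂ w - G T v := by
    simpa [ha, hc] using hUB (v, w)
  linarith

/-- Abstract finite-dimensional version of the existence assertion of
Lemma 4.3: the reduced HDG system admits at least one solution `(U,B,T)`. -/
theorem reduced_HDG_existence
    {V W Z : Type*}
    [NormedAddCommGroup V] [InnerProductSpace ℝ V] [FiniteDimensional ℝ V]
    [NormedAddCommGroup W] [InnerProductSpace ℝ W] [FiniteDimensional ℝ W]
    [NormedAddCommGroup Z] [InnerProductSpace ℝ Z] [FiniteDimensional ℝ Z]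
    (Ha Rm Pr Re γ : ℝ)
    (hHa : 0 < Ha) (hRm : 0 < Rm) (hPr : 0 < Pr) (hRe : 0 < Re) (hγ : 0 < γ)
    (aV : V →ₗ[ℝ] V →ₗ[ℝ] ℝ) (aW : W →ₗ[ℝ] W →ₗ[ℝ] ℝ) (aZ : Z →ₗ[ℝ] Z →ₗ[ℝ] ℝ)
    (haV_symm : ∀ v₁ v₂ : V, aV v₁ v₂ = aV v₂ v₁)
    (haW_symm : ∀ w₁ w₂ : W, aW w₁ w₂ = aW w₂ w₁)
    (haZ_symm : ∀ z₁ z₂ : Z, aZ z₁ z₂ = aZ z₂ z₁)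
    (haV_coer : ∀ v : V, Ha⁻¹ ^ 2 * ‖v‖ ^ 2 ≤ aV v v)
    (haW_coer : ∀ w : W, Rm⁻¹ ^ 2 * ‖w‖ ^ 2 ≤ aW w w)
    (haZ_coer : ∀ z : Z, (Pr * Re)⁻¹ * ‖z‖ ^ 2 ≤ aZ z z)
    (c₁ : V →ₗ[ℝ] V →ₗ[ℝ] V →ₗ[ℝ] ℝ)
    (c₂ : V →ₗ[ℝ] W →ₗ[ℝ] W →ₗ[ℝ] ℝ)
    (c₃ : V →ₗ[ℝ] Z →ₗ[ℝ] Z →ₗ[ℝ] ℝ)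
    (hc₁_skew : ∀ (φ v : V), c₁ φ v v = 0)
    (hc₃_skew : ∀ (u : V) (z : Z), c₃ u z z = 0)
    (G : Z →ₗ[ℝ] V →ₗ[ℝ] ℝ)
    (hG_bound : ∀ (T : Z) (v : V), |G T v| ≤ γ * ‖T‖ * ‖v‖)
    (f₁ : V →L[ℝ] ℝ) (f₂ : W →L[ℝ] ℝ) (f₃ : Z →L[ℝ] ℝ) :
    ∃ (U : V) (B : W) (T : Z),
      (∀ (v : V) (w : W),
        aV U v + aW B w + c₁ U U v + c₂ v B B - c₂ U B w
          = f₁ v + f₂ w - G T v) ∧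
      (∀ z : Z, aZ T z + c₃ U T z = f₃ z) := by
  exact reduced_HDG_existence_general
    (fun v hv ↦ (by positivity : 0 < Ha⁻¹ ^ 2 * ‖v‖ ^ 2).trans_le (haV_coer v))
    (fun w hw ↦ (by positivity : 0 < Rm⁻¹ ^ 2 * ‖w‖ ^ 2).trans_le (haW_coer w))
    (fun z hz ↦ (by positivity : 0 < (Pr * Re)⁻¹ * ‖z‖ ^ 2).trans_le (haZ_coer z))
    c₂ (fun v ↦ hc₁_skew v v) hc₃_skew G f₁ f₂ f₃
end
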